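/- Let H = Z^{2g} with symplectic basis (x_i, y_i), ω = Σ x_i ∧ y_i ∈ Λ^2 H, A_g = A_{g,1} + H ⊗ ω ⊂ H ⊗ L_2(H) (where L_2(H) is identified with Λ^2 H and A_{g,1} = {Σ_i (x_i⊗[h,y_i] - y_i⊗[h,x_i]) : h ∈ H}). Then ν(ω ∧ H) ⊆ A_g, so ν induces a map Λ^3 H/(ω ∧ H) → (H ⊗ L_2(H))/A_g, and this induced map is injective. -/

import Mathlib

/-- `H = ℤ^{2g}` with basis indexed by `Fin g ⊕ Fin g` (`Sum.inl i = x_i`, `Sum.inr i = y_i`). -/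
abbrev Hgrp (g : ℕ) := Fin g ⊕ Fin g → ℤ

/-- The symplectic intersection form `•` on `H`. -/
def isym (g : ℕ) (a b : Hgrp g) : ℤ :=
  ∑ i : Fin g, (a (Sum.inl i) * b (Sum.inr i) - a (Sum.inr i) * b (Sum.inl i))
/-- The symplectic basis vectors `x_i` of `H`. -/
def xb (g : ℕ) (i : Fin g) : Hgrp g := Pi.single (Sum.inl i) 1

/-- The symplectic basis vectors `y_i` of `H`. -/
def yb (g : ℕ) (i : Fin g) : Hgrp g := Pi.single (Sum.inr i) 1

open scoped TensorProduct

/-- The wedge product `a ∧ b ∧ c` as an element of the third exterior power. -/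
noncomputable def wedge3 {R M : Type*} [CommRing R] [AddCommGroup M] [Module R M]
    (a b c : M) : ⋀[R]^3 M :=
  ⟨ExteriorAlgebra.ιMulti R 3 ![a, b, c],
    ExteriorAlgebra.ιMulti_range R 3 ⟨![a, b, c], rfl⟩⟩

/-- The wedge product `a ∧ b` as an element of the second exterior power. -/
noncomputable def wedge2 {R M : Type*} [CommRing R] [AddCommGroup M] [Module R M]
    (a b : M) : ⋀[R]^2 M :=
  ⟨ExteriorAlgebra.ιMulti R 2 ![a, b],
    ExteriorAlgebra.ιMulti_range R 2 ⟨![a, b], rfl⟩⟩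

/-- The symplectic element `ω = ∑ᵢ xᵢ ∧ yᵢ ∈ Λ²H`. -/
noncomputable def omegaW (g : ℕ) : ⋀[ℤ]^2 (Hgrp g) :=
  ∑ i : Fin g, wedge2 (xb g i) (yb g i)

/-- `ω ∧ h ∈ Λ³H`. -/
noncomputable def omegaWedge (g : ℕ) (h : Hgrp g) : ⋀[ℤ]^3 (Hgrp g) :=
  ∑ i : Fin g, wedge3 (xb g i) (yb g i) h

/-- The subgroup `A_g = A_{g,1} + H ⊗ ω` of `H ⊗ L₂(H)` (with `L₂(H) ≅ Λ²H`). -/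
noncomputable def Ag (g : ℕ) : Submodule ℤ (Hgrp g ⊗[ℤ] ⋀[ℤ]^2 (Hgrp g)) :=
  Submodule.span ℤ
    ({v | ∃ h : Hgrp g, v = ∑ i : Fin g,
        (xb g i ⊗ₜ wedge2 h (yb g i) - yb g i ⊗ₜ wedge2 h (xb g i))} ∪
     {v | ∃ h : Hgrp g, v = h ⊗ₜ omegaW g})

/-! `ν` is the `(1, 2)` component of the comultiplication of the exterior algebra, and it satisfies
`ν (ω ∧ h) = h ⊗ ω - a(h)`, where `a(h)` runs through `A_{g,1}`. Hence `A_g = ν(ω ∧ H) + H ⊗ ω`, and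
since `ν` is injective (multiplying back gives `3`), it suffices that no nonzero `m ⊗ ω` lies in
the image of `ν`. For linear forms `α` and `β`, the functional `α ⊗ (α ∧ β)` vanishes on that image
because `α ∧ α ∧ β = 0`, while on `m ⊗ ω` it is `α m * (α ∧ β) ω`. Taking for `α, β` the coordinates
dual to `xᵢ, yᵢ`, in both orders, makes the second factor `±1`, so every coordinate of `m` is zero.
-/

section Comultiplication

open AlternatingMap exteriorPower

variable (R M : Type*) [CommRing R] [AddCommGroup M] [Module R M] (n : ℕ)

/-- The `(1, n)` component `⋀ⁿ⁺¹M → M ⊗ ⋀ⁿM` of the comultiplication of the exterior algebra,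
`v₀ ∧ ⋯ ∧ vₙ ↦ ∑ᵢ (-1)ⁱ vᵢ ⊗ (v₀ ∧ ⋯ v̂ᵢ ⋯ ∧ vₙ)`. For `n = 2` it is the map `ν`. -/
noncomputable def exteriorComult : ⋀[R]^(n + 1) M →ₗ[R] M ⊗[R] ⋀[R]^n M :=
  alternatingMapLinearEquiv <| alternatizeUncurryFin <|
    alternatingMapLinearEquiv.symm.toLinearMap ∘ₗ TensorProduct.mk R M (⋀[R]^n M)

variable {R M n} {N : Type*} [AddCommGroup N] [Module R N]

/-- The linear map `M ⊗ ⋀ⁿM → N` determined by a map that is linear in one argument and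
alternating in `n` further ones. -/
noncomputable def tensorExteriorLift (F : M →ₗ[R] M [⋀^Fin n]→ₗ[R] N) :
    M ⊗[R] ⋀[R]^n M →ₗ[R] N :=
  TensorProduct.lift (alternatingMapLinearEquiv.toLinearMap ∘ₗ F)

lemma tensorExteriorLift_tmul (F : M →ₗ[R] M [⋀^Fin n]→ₗ[R] N) (x : M) (w : ⋀[R]^n M) :
    tensorExteriorLift F (x ⊗ₜ w) = alternatingMapLinearEquiv (F x) w :=
  TensorProduct.lift.tmul x w

lemma exteriorComult_ιMulti (v : Fin (n + 1) → M) :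
    exteriorComult R M n (ιMulti R (n + 1) v) =
      ∑ i : Fin (n + 1), (-1) ^ (i : ℕ) • v i ⊗ₜ[R] ιMulti R n (i.removeNth v) := by
  simp [exteriorComult, alternatingMapLinearEquiv_apply_ιMulti, alternatizeUncurryFin_apply,
    alternatingMapLinearEquiv_symm_apply]

lemma tensorExteriorLift_comp_exteriorComult (F : M →ₗ[R] M [⋀^Fin n]→ₗ[R] N) :
    tensorExteriorLift F ∘ₗ exteriorComult R M n =
      alternatingMapLinearEquiv (alternatizeUncurryFin F) := by
  ext v
  simp [exteriorComult_ιMulti, tensorExteriorLift_tmul, alternatingMapLinearEquiv_apply_ιMulti,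
    alternatizeUncurryFin_apply]

lemma tensorExteriorLift_curryLeft_exteriorComult (w : ⋀[R]^(n + 1) M) :
    tensorExteriorLift (ιMulti R (n + 1)).curryLeft (exteriorComult R M n w) = (n + 1) • w := by
  rw [← LinearMap.comp_apply, tensorExteriorLift_comp_exteriorComult,
    alternatizeUncurryFin_curryLeft, map_nsmul, alternatingMapLinearEquiv_ιMulti]
  rfl

lemma exteriorComult_injective [IsAddTorsionFree (⋀[R]^(n + 1) M)] :
    Function.Injective (exteriorComult R M n) := fun u w h =>
  nsmul_right_injective n.succ_ne_zero <| by
    simpa only [tensorExteriorLift_curryLeft_exteriorComult] using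
      congrArg (tensorExteriorLift (ιMulti R (n + 1)).curryLeft) h

end Comultiplication

section FormWedge

open AlternatingMap exteriorPower

variable {R M : Type*} [CommRing R] [AddCommGroup M] [Module R M] {n : ℕ}

/-- The exterior product `α ∧ γ` of a linear form and an alternating form, normalized without
division: `(α ∧ γ)(v₀, …, vₙ) = ∑ᵢ (-1)ⁱ α(vᵢ) γ(v₀, …, v̂ᵢ, …, vₙ)`. -/
def formWedge (α : M →ₗ[R] R) (γ : M [⋀^Fin n]→ₗ[R] R) : M [⋀^Fin (n + 1)]→ₗ[R] R :=
  alternatizeUncurryFin (α.smulRight γ)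

lemma formWedge_formWedge_self (α : M →ₗ[R] R) (γ : M [⋀^Fin n]→ₗ[R] R) :
    formWedge α (formWedge α γ) = 0 := by
  have hcomp : α.smulRight (formWedge α γ) =
      alternatizeUncurryFinLM ∘ₗ α.smulRight (α.smulRight γ) := by
    ext x : 1
    simp [formWedge]
  rw [formWedge, hcomp]
  refine alternatizeUncurryFin_alternatizeUncurryFinLM_comp_of_symmetric fun x y => ?_
  simp only [LinearMap.smulRight_apply, LinearMap.smul_apply, smul_comm (α x)]

lemma mul_formWedge_eq_zero_of_exteriorComult_eq_tmul {w : ⋀[R]^(n + 2) M} {m : M}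
    {ω : ⋀[R]^(n + 1) M} (h : exteriorComult R M (n + 1) w = m ⊗ₜ ω)
    (α : M →ₗ[R] R) (γ : M [⋀^Fin n]→ₗ[R] R) :
    α m * alternatingMapLinearEquiv (formWedge α γ) ω = 0 :=
  calc α m * alternatingMapLinearEquiv (formWedge α γ) ω
    _ = tensorExteriorLift (α.smulRight (formWedge α γ)) (exteriorComult R M (n + 1) w) := by
      simp [h, tensorExteriorLift_tmul]
    _ = alternatingMapLinearEquiv (formWedge α (formWedge α γ)) w :=
      LinearMap.congr_fun (tensorExteriorLift_comp_exteriorComult _) w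
    _ = 0 := by simp [formWedge_formWedge_self]

end FormWedge

section Wedge

open AlternatingMap exteriorPower

variable {R M : Type*} [CommRing R] [AddCommGroup M] [Module R M]

lemma wedge2_eq_ιMulti (a b : M) : wedge2 a b = ιMulti R 2 ![a, b] := rfl

lemma wedge2_swap (a b : M) : wedge2 (R := R) a b = -wedge2 b a := by
  have hswap : ![b, a] ∘ Equiv.swap 0 1 = ![a, b] := by ext i; fin_cases i <;> rfl
  simpa only [wedge2_eq_ιMulti, hswap] using (ιMulti R 2).map_swap ![b, a] Fin.zero_ne_one

lemma exteriorComult_wedge3 (x y z : M) :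
    exteriorComult R M 2 (wedge3 x y z) =
      x ⊗ₜ wedge2 y z + y ⊗ₜ wedge2 z x + z ⊗ₜ wedge2 x y := by
  have hremove : (1 : Fin 3).removeNth ![x, y, z] = ![x, z] ∧
      (2 : Fin 3).removeNth ![x, y, z] = ![x, y] := by
    constructor <;> ext i <;> fin_cases i <;> rfl
  calc exteriorComult R M 2 (wedge3 x y z)
    _ = x ⊗ₜ wedge2 y z - y ⊗ₜ wedge2 x z + z ⊗ₜ wedge2 x y := by
      refine (exteriorComult_ιMulti ![x, y, z]).trans ?_
      rw [Fin.sum_univ_three, hremove.1, hremove.2]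
      simp [wedge2_eq_ιMulti, sub_eq_add_neg]
    _ = x ⊗ₜ wedge2 y z + y ⊗ₜ wedge2 z x + z ⊗ₜ wedge2 x y := by
      rw [wedge2_swap z x, TensorProduct.tmul_neg, sub_eq_add_neg]

lemma formWedge_wedge2 (α β : M →ₗ[R] R) (p q : M) :
    alternatingMapLinearEquiv (formWedge α (ofSubsingleton R M R (0 : Fin 1) β)) (wedge2 p q) =
      α p * β q - α q * β p := by
  refine (alternatingMapLinearEquiv_apply_ιMulti _ ![p, q]).trans ?_
  simp [formWedge, alternatizeUncurryFin_apply, Fin.sum_univ_two, Fin.removeNth, sub_eq_add_neg]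

end Wedge

section Symplectic

open AlternatingMap exteriorPower

/-- The map `ν : Λ³H → H ⊗ L₂(H)`, with `L₂(H) ≅ Λ²H`. -/
noncomputable def nu (g : ℕ) : ⋀[ℤ]^3 (Hgrp g) →ₗ[ℤ] Hgrp g ⊗[ℤ] ⋀[ℤ]^2 (Hgrp g) :=
  exteriorComult ℤ (Hgrp g) 2

/-- The map `h ↦ h ⊗ ω`, whose range is the summand `H ⊗ ω` of `A_g`. -/
noncomputable def tmulOmega (g : ℕ) : Hgrp g →ₗ[ℤ] Hgrp g ⊗[ℤ] ⋀[ℤ]^2 (Hgrp g) :=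
  (TensorProduct.mk ℤ (Hgrp g) (⋀[ℤ]^2 (Hgrp g))).flip (omegaW g)

variable {g : ℕ}

lemma nu_wedge3 (x y z : Hgrp g) :
    nu g (wedge3 x y z) = x ⊗ₜ wedge2 y z + y ⊗ₜ wedge2 z x + z ⊗ₜ wedge2 x y :=
  exteriorComult_wedge3 x y z

lemma nu_injective (g : ℕ) : Function.Injective (nu g) :=
  have : IsAddTorsionFree (⋀[ℤ]^(2 + 1) (Hgrp g)) := .of_isTorsionFree ℤ _
  exteriorComult_injective

lemma nu_omegaWedge (h : Hgrp g) :
    nu g (omegaWedge g h) = tmulOmega g h -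
      ∑ i : Fin g, (xb g i ⊗ₜ wedge2 h (yb g i) - yb g i ⊗ₜ wedge2 h (xb g i)) := by
  have htmul : tmulOmega g h = ∑ i : Fin g, h ⊗ₜ wedge2 (xb g i) (yb g i) :=
    TensorProduct.tmul_sum h Finset.univ _
  rw [omegaWedge, map_sum, htmul, ← Finset.sum_sub_distrib]
  refine Finset.sum_congr rfl fun i _ => ?_
  rw [nu_wedge3, wedge2_swap (yb g i) h, TensorProduct.tmul_neg]
  abel

lemma Ag_eq_map_nu_sup_range_tmulOmega (g : ℕ) :
    Ag g = (Submodule.span ℤ {u | ∃ h : Hgrp g, u = omegaWedge g h}).map (nu g) ⊔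
      LinearMap.range (tmulOmega g) := by
  apply le_antisymm
  · refine Submodule.span_le.mpr ?_
    rintro _ (⟨h, rfl⟩ | ⟨h, rfl⟩)
    · rw [← sub_sub_cancel (tmulOmega g h) (Finset.sum _ _), ← nu_omegaWedge]
      exact sub_mem (Submodule.mem_sup_right ⟨h, rfl⟩) <| Submodule.mem_sup_left <|
        Submodule.mem_map_of_mem <| Submodule.subset_span ⟨h, rfl⟩
    · exact Submodule.mem_sup_right ⟨h, rfl⟩
  · have tmulOmega_mem (h : Hgrp g) : tmulOmega g h ∈ Ag g :=
      Submodule.subset_span (.inr ⟨h, rfl⟩)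
    refine sup_le (Submodule.map_le_iff_le_comap.mpr <| Submodule.span_le.mpr ?_) ?_
    · rintro _ ⟨h, rfl⟩
      rw [SetLike.mem_coe, Submodule.mem_comap, nu_omegaWedge]
      exact sub_mem (tmulOmega_mem h) (Submodule.subset_span (.inl ⟨h, rfl⟩))
    · rintro _ ⟨h, rfl⟩
      exact tmulOmega_mem h

lemma formWedge_omegaW (α β : Hgrp g →ₗ[ℤ] ℤ) :
    alternatingMapLinearEquiv (formWedge α (ofSubsingleton ℤ (Hgrp g) ℤ (0 : Fin 1) β))
        (omegaW g) =
      ∑ i : Fin g, (α (xb g i) * β (yb g i) - α (yb g i) * β (xb g i)) := by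
  simp only [omegaW, map_sum, formWedge_wedge2]

lemma eq_zero_of_nu_eq_tmulOmega {w : ⋀[ℤ]^3 (Hgrp g)} {m : Hgrp g}
    (h : nu g w = tmulOmega g m) : m = 0 := by
  have coord_mul (k l : Fin g ⊕ Fin g) :
      m k * ∑ i : Fin g, (xb g i k * yb g i l - yb g i k * xb g i l) = 0 := by
    have hproj := mul_formWedge_eq_zero_of_exteriorComult_eq_tmul h (LinearMap.proj k)
      (ofSubsingleton ℤ (Hgrp g) ℤ (0 : Fin 1) (LinearMap.proj l))
    rwa [formWedge_omegaW] at hproj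
  ext (i | i)
  · simpa [xb, yb, Pi.single_apply] using coord_mul (.inl i) (.inr i)
  · simpa [xb, yb, Pi.single_apply] using coord_mul (.inr i) (.inl i)

end Symplectic

/-- `ν(ω ∧ H) ⊆ A_g`, so `ν` induces a map `Λ³H/(ω∧H) → (H ⊗ L₂(H))/A_g`, and this induced
map is injective (elements of `Λ³H` sent into `A_g` lie in `ω ∧ H`). -/
theorem nu_mod_Ag_injective (g : ℕ) :
    ∃ ν : ⋀[ℤ]^3 (Hgrp g) →ₗ[ℤ] Hgrp g ⊗[ℤ] ⋀[ℤ]^2 (Hgrp g),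
      (∀ x y z : Hgrp g, ν (wedge3 x y z)
          = x ⊗ₜ wedge2 y z + y ⊗ₜ wedge2 z x + z ⊗ₜ wedge2 x y) ∧
      (∀ h : Hgrp g, ν (omegaWedge g h) ∈ Ag g) ∧
      (∀ w : ⋀[ℤ]^3 (Hgrp g), ν w ∈ Ag g →
        w ∈ Submodule.span ℤ {u | ∃ h : Hgrp g, u = omegaWedge g h}) := by
  have Ag_eq := Ag_eq_map_nu_sup_range_tmulOmega g
  refine ⟨nu g, nu_wedge3, fun h => ?_, fun w hw => ?_⟩
  · rw [Ag_eq]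
    exact Submodule.mem_sup_left <| Submodule.mem_map_of_mem <| Submodule.subset_span ⟨h, rfl⟩
  · rw [Ag_eq] at hw
    obtain ⟨_, ⟨u, hu, rfl⟩, _, ⟨m, rfl⟩, hsum⟩ := Submodule.mem_sup.mp hw
    have hdiff : nu g (w - u) = tmulOmega g m := by rw [map_sub, ← hsum, add_sub_cancel_left]
    have hm : m = 0 := eq_zero_of_nu_eq_tmulOmega hdiff
    have huw : w = u := nu_injective g <| by rwa [hm, map_zero, map_sub, sub_eq_zero] at hdiff
    exact huw ▸ hu
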